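/- Let (ρ,σ) be a direction with ρ > 0 and ρ + σ < 0, let i ≥ 0 and n ≥ 2 be integers, and let R, G₁ ∈ K[x,y] be (ρ,σ)-homogeneous polynomials with R ≠ 0 such that [R,G₁] = R^i and (n−1)·v_{ρ,σ}(R) + ρ + σ ≥ 0. Then there exists a (ρ,σ)-homogeneous polynomial G₂ ∈ K[x,y] such that [R,G₂] = R^n. -/

import Mathlib

open MvPolynomial

noncomputable section

variable {K : Type*} [Field K] [CharZero K]

/-- The support of `P` as a set of pairs `(i,j)` of exponents of `x^i y^j`. -/
def Supp (P : MvPolynomial (Fin 2) K) : Set (ℕ × ℕ) :=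
  {p | MvPolynomial.coeff (Finsupp.single 0 p.1 + Finsupp.single 1 p.2) P ≠ 0}

/-- The Jacobian bracket `[P,Q] = ∂ₓP ∂_yQ − ∂ₓQ ∂_yP`. -/
def Jb (P Q : MvPolynomial (Fin 2) K) : MvPolynomial (Fin 2) K :=
  pderiv 0 P * pderiv 1 Q - pderiv 0 Q * pderiv 1 P

/-- The `(ρ,σ)`-degree `v_{ρ,σ}(P)` (the maximum of `ρi+σj` on the support). -/
def wdeg (ρ σ : ℤ) (P : MvPolynomial (Fin 2) K) : ℤ :=
  sSup {d : ℤ | ∃ p ∈ Supp P, d = ρ * (p.1 : ℤ) + σ * (p.2 : ℤ)}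

/-- The support of the `(ρ,σ)`-leading form of `P`. -/
def LeadSupp (ρ σ : ℤ) (P : MvPolynomial (Fin 2) K) : Set (ℕ × ℕ) :=
  {p | p ∈ Supp P ∧ ρ * (p.1 : ℤ) + σ * (p.2 : ℤ) = wdeg ρ σ P}

/-- `P` is `(ρ,σ)`-homogeneous. -/
def IsHomog (ρ σ : ℤ) (P : MvPolynomial (Fin 2) K) : Prop :=
  ∀ p ∈ Supp P, ∀ q ∈ Supp P,
    ρ * (p.1 : ℤ) + σ * (p.2 : ℤ) = ρ * (q.1 : ℤ) + σ * (q.2 : ℤ)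

/-- `P` is a monomial: its support has at most one point. -/
def IsMonomial (P : MvPolynomial (Fin 2) K) : Prop := (Supp P).Subsingleton

/-- `e` is the point `en_{ρ,σ}(P)`: the point of the support of the leading form
with largest second coordinate. -/
def IsEn (ρ σ : ℤ) (P : MvPolynomial (Fin 2) K) (e : ℕ × ℕ) : Prop :=
  e ∈ LeadSupp ρ σ P ∧ ∀ q ∈ LeadSupp ρ σ P, q.2 ≤ e.2

/-- `e` is the point `st_{ρ,σ}(P)`: the point of the support of the leading form
with smallest second coordinate. -/
def IsSt (ρ σ : ℤ) (P : MvPolynomial (Fin 2) K) (e : ℕ × ℕ) : Prop :=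
  e ∈ LeadSupp ρ σ P ∧ ∀ q ∈ LeadSupp ρ σ P, e.2 ≤ q.2

/-!
Write `d` and `e` for the weighted degrees of `R` and `G`. If `[R, G] = R ^ i` then
`[R, R * G] = R ^ (i + 1)`, so exponents are easily raised; to lower one from `n + 1` to `n`, it
suffices to show that `R ∣ G`. Comparing degrees in `[R, G] = R ^ (n + 1)` gives
`e = n * d + ρ + σ ≥ d > 0`, the last inequality because `ρ + σ < 0`, and Euler's identity gives
that `R ^ (n + 1)`, hence `R ^ 2`, divides both `d * R * ∂ⱼG - e * G * ∂ⱼR`. Let `p` be a prime of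
multiplicity `a` in `R` and `k` in `G`. If `k < a`, then cancelling `p ^ (a + k)` shows that `p`
divides `(d * k - e * a) * ∂ⱼp` for both `j`, where `d * k < e * a`; hence `p` divides its own
partial derivatives, so it is constant, which is absurd.
-/

section Derivation

variable {A B : Type*} [CommSemiring A] [CommRing B] [IsDomain B] [Algebra A B]

theorem dvd_mul_of_pow_dvd_mul_sub_mul (D : Derivation A B B) {p u v c e : B} {a k : ℕ}
    (hp : Prime p) (hu : ¬p ∣ u) (hv : ¬p ∣ v)
    (h : p ^ (a + k) ∣ c * (p ^ a * u * D (p ^ k * v)) - e * (p ^ k * v * D (p ^ a * u))) :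
    p ∣ (c * k - e * a) * D p := by
  have mul_apply_pow (n : ℕ) : p * D (p ^ n) = n * p ^ n * D p := by
    cases n with
    | zero => simp
    | succ n => simp only [D.leibniz_pow, nsmul_eq_mul, smul_eq_mul, Nat.add_sub_cancel]; ring
  obtain ⟨q, hq⟩ := h
  have hcancel : p ^ (a + k) * ((c * k - e * a) * D p * (u * v)) =
      p ^ (a + k) * (p * (q - c * u * D v + e * v * D u)) := by
    simp only [D.leibniz, smul_eq_mul, pow_add] at hq ⊢
    linear_combination p * hq - c * p ^ a * u * v * mul_apply_pow k +
      e * p ^ k * u * v * mul_apply_pow a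
  have hdvd : p ∣ (c * k - e * a) * D p * (u * v) :=
    ⟨_, mul_left_cancel₀ (pow_ne_zero _ hp.ne_zero) hcancel⟩
  exact (hp.dvd_or_dvd hdvd).resolve_right fun huv => (hp.dvd_or_dvd huv).elim hu hv

end Derivation

section PartialDerivatives

variable {τ S : Type*} [CommSemiring S]

theorem degreeOf_pderiv_lt {j : τ} {P : MvPolynomial τ S} (hj : degreeOf j P ≠ 0) :
    degreeOf j (pderiv j P) < degreeOf j P := by
  rw [degreeOf_lt_iff (Nat.pos_of_ne_zero hj)]
  intro m hm
  rw [mem_support_iff, coeff_pderiv] at hm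
  have hle := monomial_le_degreeOf j (mem_support_iff.2 (left_ne_zero_of_mul hm))
  rw [Finsupp.add_apply, Finsupp.single_eq_same] at hle
  exact hle

theorem pderiv_ne_zero_of_degreeOf_ne_zero [NoZeroDivisors S] [CharZero S] {j : τ}
    {P : MvPolynomial τ S} (hj : degreeOf j P ≠ 0) : pderiv j P ≠ 0 := by
  intro hzero
  refine hj (Nat.le_zero.1 (degreeOf_le_iff.2 fun m hm => ?_))
  by_contra hmj
  have hcoeff := congrArg (coeff (m - Finsupp.single j 1)) hzero
  rw [coeff_pderiv, Finsupp.sub_add_single_one_cancel (by omega), coeff_zero] at hcoeff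
  exact mul_ne_zero (mem_support_iff.1 hm) (Nat.cast_add_one_ne_zero _) hcoeff

theorem degreeOf_eq_zero_of_dvd_pderiv [NoZeroDivisors S] [CharZero S] {j : τ}
    {P : MvPolynomial τ S} (h : P ∣ pderiv j P) : degreeOf j P = 0 := by
  by_contra hj
  have hderiv := pderiv_ne_zero_of_degreeOf_ne_zero hj
  have hlt := degreeOf_pderiv_lt hj
  obtain ⟨Q, hQ⟩ := h
  rw [hQ] at hderiv
  rw [hQ, degreeOf_mul_eq (left_ne_zero_of_mul hderiv) (right_ne_zero_of_mul hderiv)] at hlt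
  omega

theorem eq_C_of_forall_degreeOf_eq_zero {P : MvPolynomial τ S} (h : ∀ j, degreeOf j P = 0) :
    P = C (coeff 0 P) :=
  totalDegree_eq_zero_iff_eq_C.1 <| (totalDegree_eq_zero_iff τ P).2 fun _ hm j =>
    Nat.le_zero.1 (h j ▸ monomial_le_degreeOf j hm)

theorem exists_not_dvd_pderiv_of_prime {p : MvPolynomial τ K} (hp : Prime p) :
    ∃ j, ¬p ∣ pderiv j p := by
  by_contra! h
  have hC := eq_C_of_forall_degreeOf_eq_zero fun j => degreeOf_eq_zero_of_dvd_pderiv (h j)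
  have hne : coeff 0 p ≠ 0 := fun h0 => hp.ne_zero (by rw [hC, h0, C_0])
  exact hp.not_isUnit (hC ▸ hne.isUnit.map C)

theorem isUnit_intCast_of_ne_zero {c : ℤ} (hc : c ≠ 0) : IsUnit (c : MvPolynomial τ K) := by
  rw [← map_intCast (C : K →+* MvPolynomial τ K)]
  exact (Int.cast_ne_zero.2 hc).isUnit.map C

theorem exponent_le_of_forall_sq_dvd_mul_pderiv_sub {p u v : MvPolynomial τ K} {d e : ℤ} {a k : ℕ}
    (hp : Prime p) (hu : ¬p ∣ u) (hv : ¬p ∣ v) (hd : 0 < d) (hde : d ≤ e)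
    (h : ∀ j, (p ^ a * u) ^ 2 ∣
      d * (p ^ a * u * pderiv j (p ^ k * v)) - e * (p ^ k * v * pderiv j (p ^ a * u))) : a ≤ k := by
  by_contra! hka
  obtain ⟨j, hj⟩ := exists_not_dvd_pderiv_of_prime hp
  have hpow : p ^ (a + k) ∣ (p ^ a * u) ^ 2 := by
    rw [mul_pow, ← pow_mul]
    exact (pow_dvd_pow p (by omega)).mul_right _
  have hresidue := dvd_mul_of_pow_dvd_mul_sub_mul (c := (d : MvPolynomial τ K))
    (e := (e : MvPolynomial τ K)) (a := a) (k := k) (pderiv j) hp hu hv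
  have hdvd := hresidue (hpow.trans (h j))
  have hne : d * k - e * a ≠ 0 := by
    have hda : d * k < d * a := mul_lt_mul_of_pos_left (by exact_mod_cast hka) hd
    have hea : d * a ≤ e * a := mul_le_mul_of_nonneg_right hde (by positivity)
    exact (sub_neg_of_lt (hda.trans_le hea)).ne
  have hunit : IsUnit (d * k - e * a : MvPolynomial τ K) := by
    exact_mod_cast isUnit_intCast_of_ne_zero (τ := τ) (K := K) hne
  exact hj (hunit.dvd_mul_left.1 hdvd)

theorem dvd_of_forall_sq_dvd_mul_pderiv_sub {P Q : MvPolynomial τ K} {d e : ℤ} (hP : P ≠ 0)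
    (hd : 0 < d) (hde : d ≤ e)
    (h : ∀ j, P ^ 2 ∣ d * (P * pderiv j Q) - e * (Q * pderiv j P)) : P ∣ Q := by
  rcases eq_or_ne Q 0 with rfl | hQ
  · exact dvd_zero P
  rw [UniqueFactorizationMonoid.dvd_iff_emultiplicity_le hP]
  intro p hp
  have hfinP := FiniteMultiplicity.of_prime_left hp hP
  have hfinQ := FiniteMultiplicity.of_prime_left hp hQ
  obtain ⟨u, hPu, hu⟩ := hfinP.exists_eq_pow_mul_and_not_dvd
  obtain ⟨v, hQv, hv⟩ := hfinQ.exists_eq_pow_mul_and_not_dvd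
  rw [hfinP.emultiplicity_eq_multiplicity, hfinQ.emultiplicity_eq_multiplicity, Nat.cast_le]
  exact exponent_le_of_forall_sq_dvd_mul_pderiv_sub hp hu hv hd hde (hPu ▸ hQv ▸ h)

end PartialDerivatives

section Euler

variable {τ S : Type*} [CommRing S]

/-- The Euler derivation `∑ i, w i • X i * ∂/∂X i` with integer weights `w`, whose eigenvectors are
the weighted homogeneous polynomials. It is encoded by its values on the variables, so that the set
of variables may be infinite. -/
def eulerDerivation (w : τ → ℤ) : Derivation S (MvPolynomial τ S) (MvPolynomial τ S) :=
  mkDerivation S fun i => w i • X i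

theorem eulerDerivation_monomial (w : τ → ℤ) (m : τ →₀ ℕ) (c : S) :
    eulerDerivation w (monomial m c) = Finsupp.weight w m • monomial m c := by
  have hterm (i : τ) (hi : i ∈ m.support) :
      monomial (m - Finsupp.single i 1) (m i : S) • w i • X i =
        (m i • w i) • monomial m (1 : S) := by
    rw [X, smul_comm, smul_eq_mul, monomial_mul, mul_one,
      Finsupp.sub_add_single_one_cancel (Finsupp.mem_support_iff.1 hi), smul_assoc, smul_comm (m i),
      smul_monomial (m i), nsmul_one]
  rw [eulerDerivation, mkDerivation_monomial, Finsupp.weight_apply, Finsupp.sum, Finsupp.sum,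
    Finset.sum_congr rfl hterm, ← Finset.sum_smul, smul_comm, smul_monomial c, smul_eq_mul, mul_one]

theorem eulerDerivation_apply [Fintype τ] (w : τ → ℤ) (P : MvPolynomial τ S) :
    eulerDerivation w P = ∑ i, w i • (X i * pderiv i P) := by
  induction P using MvPolynomial.induction_on' with
  | add P Q hP hQ => simp only [map_add, mul_add, smul_add, Finset.sum_add_distrib, hP, hQ]
  | monomial m c =>
    simp only [eulerDerivation_monomial, X_mul_pderiv_monomial, Finsupp.weight_eq_sum,
      Finset.sum_smul, smul_assoc, smul_comm (w _)]

theorem coeff_eulerDerivation (w : τ → ℤ) (P : MvPolynomial τ S) (m : τ →₀ ℕ) :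
    coeff m (eulerDerivation w P) = Finsupp.weight w m • coeff m P := by
  classical
  induction P using MvPolynomial.induction_on' with
  | add P Q hP hQ => simp only [map_add, coeff_add, smul_add, hP, hQ]
  | monomial n c =>
    rw [eulerDerivation_monomial, coeff_smul, coeff_monomial]
    split_ifs with h
    · rw [h]
    · rw [smul_zero, smul_zero]

theorem eulerDerivation_eq_zsmul_of_isWeightedHomogeneous {w : τ → ℤ} {P : MvPolynomial τ S} {d : ℤ}
    (h : IsWeightedHomogeneous w P d) : eulerDerivation w P = d • P := by
  ext m
  rw [coeff_eulerDerivation, coeff_smul]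
  rcases eq_or_ne (coeff m P) 0 with hm | hm
  · rw [hm, smul_zero, smul_zero]
  · rw [h hm]

theorem isWeightedHomogeneous_of_eulerDerivation_eq_zsmul [IsDomain S] [CharZero S] {w : τ → ℤ}
    {P : MvPolynomial τ S} {d : ℤ} (h : eulerDerivation w P = d • P) :
    IsWeightedHomogeneous w P d := by
  intro m hm
  have hcoeff := congrArg (coeff m) h
  rw [coeff_eulerDerivation, coeff_smul] at hcoeff
  exact smul_left_injective ℤ hm hcoeff

theorem isWeightedHomogeneous_of_mul_left [IsDomain S] [CharZero S] {w : τ → ℤ}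
    {P Q : MvPolynomial τ S} {d e : ℤ} (hP0 : P ≠ 0) (hP : IsWeightedHomogeneous w P d)
    (hPQ : IsWeightedHomogeneous w (P * Q) e) : IsWeightedHomogeneous w Q (e - d) := by
  have hEP := eulerDerivation_eq_zsmul_of_isWeightedHomogeneous hP
  have hEPQ := eulerDerivation_eq_zsmul_of_isWeightedHomogeneous hPQ
  apply isWeightedHomogeneous_of_eulerDerivation_eq_zsmul
  apply mul_left_cancel₀ hP0
  simp only [Derivation.leibniz, hEP, smul_eq_mul, zsmul_eq_mul] at hEPQ ⊢
  push_cast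
  linear_combination hEPQ

end Euler

section Bracket

variable {F : Type*} [Field F]

theorem Jb_pow_mul_self (P Q : MvPolynomial (Fin 2) F) (k : ℕ) :
    Jb P (P ^ k * Q) = P ^ k * Jb P Q := by
  simp only [Jb, pderiv_mul, pderiv_pow]
  ring

theorem isWeightedHomogeneous_Jb {M : Type*} [AddCommGroup M] {w : Fin 2 → M}
    {P Q : MvPolynomial (Fin 2) F} {d e : M} (hP : IsWeightedHomogeneous w P d)
    (hQ : IsWeightedHomogeneous w Q e) : IsWeightedHomogeneous w (Jb P Q) (d + e - w 0 - w 1) := by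
  have hP' (j : Fin 2) : IsWeightedHomogeneous w (pderiv j P) (d - w j) :=
    hP.pderiv (sub_add_cancel _ _)
  have hQ' (j : Fin 2) : IsWeightedHomogeneous w (pderiv j Q) (e - w j) :=
    hQ.pderiv (sub_add_cancel _ _)
  refine .sub ?_ ?_
  · have hdeg : d - w 0 + (e - w 1) = d + e - w 0 - w 1 := by abel
    exact hdeg ▸ (hP' 0).mul (hQ' 1)
  · have hdeg : e - w 0 + (d - w 1) = d + e - w 0 - w 1 := by abel
    exact hdeg ▸ (hQ' 0).mul (hP' 1)

theorem Jb_dvd_mul_pderiv_sub {w : Fin 2 → ℤ} {P Q : MvPolynomial (Fin 2) F} {d e : ℤ}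
    (hP : IsWeightedHomogeneous w P d) (hQ : IsWeightedHomogeneous w Q e) (j : Fin 2) :
    Jb P Q ∣ d * (P * pderiv j Q) - e * (Q * pderiv j P) := by
  have hEP := eulerDerivation_eq_zsmul_of_isWeightedHomogeneous hP
  have hEQ := eulerDerivation_eq_zsmul_of_isWeightedHomogeneous hQ
  simp only [eulerDerivation_apply, Fin.sum_univ_two, zsmul_eq_mul] at hEP hEQ
  fin_cases j
  · refine ⟨-((w 1 : MvPolynomial (Fin 2) F) * X 1), ?_⟩
    simp only [Jb, Fin.zero_eta]
    linear_combination pderiv 0 P * hEQ - pderiv 0 Q * hEP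
  · refine ⟨(w 0 : MvPolynomial (Fin 2) F) * X 0, ?_⟩
    simp only [Jb, Fin.mk_one]
    linear_combination pderiv 1 P * hEQ - pderiv 1 Q * hEP

theorem weightedDegree_eq_of_Jb_eq_pow_succ {w : Fin 2 → ℤ} {R G : MvPolynomial (Fin 2) F}
    {d e : ℤ} {n : ℕ} (hR0 : R ≠ 0) (hR : IsWeightedHomogeneous w R d)
    (hG : IsWeightedHomogeneous w G e) (hbr : Jb R G = R ^ (n + 1)) : e = n * d + w 0 + w 1 := by
  have hJb := isWeightedHomogeneous_Jb hR hG
  rw [hbr] at hJb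
  have hdeg := hJb.inj_right (pow_ne_zero _ hR0) (hR.pow (n + 1))
  rw [nsmul_eq_mul] at hdeg
  push_cast at hdeg
  linarith

theorem dvd_of_Jb_eq_pow_succ {w : Fin 2 → ℤ} {R G : MvPolynomial (Fin 2) K} {d e : ℤ} {n : ℕ}
    (hR0 : R ≠ 0) (hR : IsWeightedHomogeneous w R d) (hG : IsWeightedHomogeneous w G e)
    (hd : 0 < d) (hn : 1 ≤ n) (hineq : 0 ≤ (n - 1) * d + w 0 + w 1)
    (hbr : Jb R G = R ^ (n + 1)) : R ∣ G := by
  have hdeg := weightedDegree_eq_of_Jb_eq_pow_succ hR0 hR hG hbr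
  refine dvd_of_forall_sq_dvd_mul_pderiv_sub hR0 hd (by linarith) fun j => ?_
  have hsq : R ^ 2 ∣ Jb R G := hbr ▸ pow_dvd_pow R (by omega)
  exact hsq.trans (Jb_dvd_mul_pderiv_sub hR hG j)

theorem exists_Jb_eq_pow_of_Jb_eq_pow_succ {w : Fin 2 → ℤ} {R G : MvPolynomial (Fin 2) K} {d e : ℤ}
    {n : ℕ} (hR0 : R ≠ 0) (hR : IsWeightedHomogeneous w R d) (hG : IsWeightedHomogeneous w G e)
    (hd : 0 < d) (hn : 1 ≤ n) (hineq : 0 ≤ (n - 1) * d + w 0 + w 1)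
    (hbr : Jb R G = R ^ (n + 1)) :
    ∃ H, IsWeightedHomogeneous w H (e - d) ∧ Jb R H = R ^ n := by
  obtain ⟨H, rfl⟩ := dvd_of_Jb_eq_pow_succ hR0 hR hG hd hn hineq hbr
  refine ⟨H, isWeightedHomogeneous_of_mul_left hR0 hR hG, mul_left_cancel₀ hR0 ?_⟩
  calc R * Jb R H = Jb R (R * H) := by simpa only [pow_one] using (Jb_pow_mul_self R H 1).symm
    _ = R * R ^ n := by rw [hbr, pow_succ']

end Bracket

section Homogeneous

variable {F : Type*} [Field F] {ρ σ : ℤ} {P : MvPolynomial (Fin 2) F}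

theorem isWeightedHomogeneous_iff_forall_mem_Supp {d : ℤ} :
    IsWeightedHomogeneous ![ρ, σ] P d ↔ ∀ p ∈ Supp P, ρ * (p.1 : ℤ) + σ * (p.2 : ℤ) = d := by
  constructor
  · intro h p hp
    simpa [Finsupp.weight_eq_sum, mul_comm] using h hp
  · intro h m hm
    have hm_eq : Finsupp.single 0 (m 0) + Finsupp.single 1 (m 1) = m := by
      ext j
      fin_cases j <;> simp
    have hmem : (m 0, m 1) ∈ Supp P := by rwa [Supp, Set.mem_ofPred_eq, hm_eq]
    rw [← h _ hmem, Finsupp.weight_eq_sum]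
    simp [mul_comm]

theorem isHomog_iff_exists_isWeightedHomogeneous :
    IsHomog ρ σ P ↔ ∃ d, IsWeightedHomogeneous ![ρ, σ] P d := by
  simp only [isWeightedHomogeneous_iff_forall_mem_Supp]
  constructor
  · intro h
    rcases (Supp P).eq_empty_or_nonempty with hP | ⟨q, hq⟩
    · exact ⟨0, by simp [hP]⟩
    · exact ⟨_, fun p hp => h p hp q hq⟩
  · rintro ⟨d, h⟩ p hp q hq
    rw [h p hp, h q hq]

theorem Supp_nonempty (hP : P ≠ 0) : (Supp P).Nonempty := by
  by_contra hempty
  have h (d : ℤ) : IsWeightedHomogeneous ![0, 0] P d :=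
    isWeightedHomogeneous_iff_forall_mem_Supp.2 (by simp [Set.not_nonempty_iff_eq_empty.1 hempty])
  exact zero_ne_one ((h 0).inj_right hP (h 1))

theorem wdeg_eq_of_isWeightedHomogeneous {d : ℤ} (hP0 : P ≠ 0)
    (hP : IsWeightedHomogeneous ![ρ, σ] P d) : wdeg ρ σ P = d := by
  rw [isWeightedHomogeneous_iff_forall_mem_Supp] at hP
  obtain ⟨q, hq⟩ := Supp_nonempty hP0
  have hset : {c : ℤ | ∃ p ∈ Supp P, c = ρ * (p.1 : ℤ) + σ * (p.2 : ℤ)} = {d} :=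
    Set.eq_singleton_iff_unique_mem.2 ⟨⟨q, hq, (hP q hq).symm⟩, fun _ ⟨p, hp, hc⟩ => hc ▸ hP p hp⟩
  rw [wdeg, hset, csSup_singleton]

end Homogeneous

theorem stmt8_general {ρ σ : ℤ} {i n : ℕ} (hn : 1 ≤ n) {R G₁ : MvPolynomial (Fin 2) K}
    (hR : R ≠ 0) (hhomR : IsHomog ρ σ R) (hhomG : IsHomog ρ σ G₁) (hbr : Jb R G₁ = R ^ i)
    (hdeg : 0 < wdeg ρ σ R) (hineq : 0 ≤ ((n : ℤ) - 1) * wdeg ρ σ R + ρ + σ) :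
    ∃ G₂ : MvPolynomial (Fin 2) K, IsHomog ρ σ G₂ ∧ Jb R G₂ = R ^ n := by
  simp only [isHomog_iff_exists_isWeightedHomogeneous] at hhomR hhomG ⊢
  obtain ⟨d, hRd⟩ := hhomR
  obtain ⟨e, hGe⟩ := hhomG
  rw [wdeg_eq_of_isWeightedHomogeneous hR hRd] at hdeg hineq
  rcases le_total i n with hin | hni
  · refine ⟨R ^ (n - i) * G₁, ⟨_, (hRd.pow (n - i)).mul hGe⟩, ?_⟩
    rw [Jb_pow_mul_self, hbr, pow_sub_mul_pow R hin]
  · refine Nat.decreasingInduction' (fun k _ hnk ⟨G, ⟨c, hGc⟩, hbrG⟩ => ?_) hni ⟨G₁, ⟨e, hGe⟩, hbr⟩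
    have hineqk : 0 ≤ ((k : ℤ) - 1) * d + ρ + σ := hineq.trans (by gcongr)
    obtain ⟨H, hH, hbrH⟩ :=
      exists_Jb_eq_pow_of_Jb_eq_pow_succ hR hRd hGc hdeg (hn.trans hnk) hineqk hbrG
    exact ⟨H, ⟨_, hH⟩, hbrH⟩

/-- Theorem "reduccion de j": if `[R,G₁]=R^i` and `(n−1)·v_{ρ,σ}(R)+ρ+σ ≥ 0` with
`n ≥ 2`, then there is a `(ρ,σ)`-homogeneous `G₂` with `[R,G₂]=R^n`. -/
theorem stmt8 (K : Type*) [Field K] [CharZero K]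
    (ρ σ : ℤ) (hgcd : Int.gcd ρ σ = 1) (hρ : 0 < ρ) (hρσ : ρ + σ < 0)
    (i n : ℕ) (hn : 2 ≤ n)
    (R G₁ : MvPolynomial (Fin 2) K) (hR : R ≠ 0)
    (hhomR : IsHomog ρ σ R) (hhomG : IsHomog ρ σ G₁)
    (hbr : Jb R G₁ = R ^ i)
    (hineq : 0 ≤ ((n : ℤ) - 1) * wdeg ρ σ R + ρ + σ) :
    ∃ G₂ : MvPolynomial (Fin 2) K, IsHomog ρ σ G₂ ∧ Jb R G₂ = R ^ n := by
  have hdeg : 0 < wdeg ρ σ R := by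
    have hn' : (0 : ℤ) < n - 1 := by omega
    exact pos_of_mul_pos_right (show 0 < ((n : ℤ) - 1) * wdeg ρ σ R by linarith) hn'.le
  exact stmt8_general (by omega) hR hhomR hhomG hbr hdeg hineq

end
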